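/- Let x ≥ 3.5 be a half-integer (x = m + 1/2 for some positive integer m) and let T ≥ 1/log(3/2). Then the series ∑_{n=2}^∞ (x/n)^{1/log x} · (Λ(n)/(n·log n)) · min{1, 1/(T·|log(x/n)|)} is strictly less than (1/T)·(40.22465·log(log x) + 58.11106 + 3.86972/log x + 5.21918·(log x)/√x − 1.85268/√x). -/

import Mathlib

/-!
Since `x ^ (1 / log x) = e`, the terms with `|log (x / n)| ≥ log (3 / 2)` are dominated by
`(6.71 / T) Λ(n) / (n ^ s log n)` with `s = 1 + 1 / log x`, and the sum of `Λ(n) / (n ^ s log n)` is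
`log ζ(s) ≤ log (1 + log x)`. The other terms are supported on prime powers and are at most a
constant times `1 / (T |x - n|)`. Cut the neighbourhood of `x` into shells
`2 ^ k ≤ |x - n| < 2 ^ (k + 1)`: a Selberg sieve by the primes up to `2 ^ (k / 5)` shows that such a
shell contains `O(2 ^ k / k)` prime powers, so it contributes `O(1 / (T k))`, and the harmonic sum
over `k` up to `log x / log 2` yields `log (log x)`.
-/

open Finset

section OptimalWeights

open ArithmeticFunction BoundingSieve
open scoped ArithmeticFunction.Moebius

lemma sum_moebius_divisors_filter_dvd {k : ℕ} (hk : Squarefree k) (l : ℕ) :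
    ∑ d ∈ k.divisors with l ∣ d, μ d = if k = l then μ l else 0 := by
  by_cases hlk : l ∣ k
  · obtain ⟨t, rfl⟩ := hlk
    have hl0 : l ≠ 0 := (Nat.mul_ne_zero_iff.mp hk.ne_zero).1
    have ht0 : t ≠ 0 := (Nat.mul_ne_zero_iff.mp hk.ne_zero).2
    have himage : {d ∈ (l * t).divisors | l ∣ d} = t.divisors.image (l * ·) := by
      ext d
      simp only [mem_filter, Nat.mem_divisors, mem_image]
      constructor
      · rintro ⟨⟨hd, -⟩, e, rfl⟩
        exact ⟨e, ⟨Nat.dvd_of_mul_dvd_mul_left (Nat.pos_of_ne_zero hl0) hd, ht0⟩, rfl⟩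
      · rintro ⟨e, ⟨he, -⟩, rfl⟩
        exact ⟨⟨Nat.mul_dvd_mul_left l he, hk.ne_zero⟩, dvd_mul_right l e⟩
    have hmul : ∀ e ∈ t.divisors, μ (l * e) = μ l * μ e := fun e he ↦
      isMultiplicative_moebius.map_mul_of_coprime <|
        (Nat.coprime_of_squarefree_mul hk).coprime_dvd_right (Nat.dvd_of_mem_divisors he)
    rw [himage, sum_image fun a _ b _ hab ↦ Nat.eq_of_mul_eq_mul_left (Nat.pos_of_ne_zero hl0) hab,
      sum_congr rfl hmul, ← mul_sum, ← coe_mul_zeta_apply, moebius_mul_coe_zeta, one_apply]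
    simp [hl0]
  · rw [filter_false_of_mem fun d hd hld ↦ hlk (hld.trans (Nat.dvd_of_mem_divisors hd)), sum_empty,
      if_neg (by rintro rfl; exact hlk dvd_rfl)]

variable (s : BoundingSieve) (D : Finset ℕ)

/-- The denominator of Selberg's upper bound: the sum of the Selberg terms over the set `D` of
sieving moduli. -/
noncomputable def selbergMass : ℝ := ∑ l ∈ D, s.selbergTerms l

/-- Selberg's weights with sieving moduli `D`, minimising the main term of the Λ² sieve among the
weights supported on the divisors of elements of `D` and equal to `1` at `1`. They are given in the
closed form obtained by Möbius inversion of the diagonalised quadratic form. -/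
noncomputable def selbergWeight (d : ℕ) : ℝ :=
  μ d / (s.nu d * selbergMass s D) * ∑ l ∈ D with d ∣ l, s.selbergTerms l

variable {s D}

lemma selbergMass_pos (hD : D ⊆ s.prodPrimes.divisors) (hne : D.Nonempty) :
    0 < selbergMass s D :=
  sum_pos (fun _ hl ↦ selbergTerms_pos (Nat.dvd_of_mem_divisors (hD hl))) hne

lemma selbergWeight_one (hG : selbergMass s D ≠ 0) : selbergWeight s D 1 = 1 := by
  simp only [selbergWeight, moebius_apply_one, s.nu_mult.map_one, one_dvd, filter_true]
  simpa [selbergMass] using inv_mul_cancel₀ hG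

lemma selbergWeight_eq_zero {d : ℕ} (hd : ∀ l ∈ D, ¬ d ∣ l) : selbergWeight s D d = 0 := by
  rw [selbergWeight, filter_false_of_mem hd, sum_empty, mul_zero]

lemma abs_selbergWeight_le (hD : D ⊆ s.prodPrimes.divisors) {d : ℕ} (hd : d ∣ s.prodPrimes) :
    |selbergWeight s D d| ≤ (s.nu d)⁻¹ := by
  have hν := nu_pos_of_dvd_prodPrimes hd
  have hg : ∀ l ∈ D, 0 ≤ s.selbergTerms l := fun l hl ↦
    (selbergTerms_pos (Nat.dvd_of_mem_divisors (hD hl))).le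
  have hG : 0 ≤ selbergMass s D := sum_nonneg hg
  have hmultiples : 0 ≤ ∑ l ∈ D with d ∣ l, s.selbergTerms l :=
    sum_nonneg fun l hl ↦ hg l (mem_of_mem_filter l hl)
  have hsum : ∑ l ∈ D with d ∣ l, s.selbergTerms l ≤ selbergMass s D :=
    sum_le_sum_of_subset_of_nonneg (filter_subset _ _) fun l hl _ ↦ hg l hl
  have hμ : |(μ d : ℝ)| ≤ 1 := mod_cast abs_moebius_le_one (n := d)
  rw [selbergWeight, abs_mul, abs_div, abs_of_nonneg (mul_nonneg hν.le hG),
    abs_of_nonneg hmultiples]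
  calc |(μ d : ℝ)| / (s.nu d * selbergMass s D) * ∑ l ∈ D with d ∣ l, s.selbergTerms l
      ≤ 1 / (s.nu d * selbergMass s D) * selbergMass s D := by gcongr
    _ = (s.nu d)⁻¹ * (selbergMass s D / selbergMass s D) := by ring
    _ ≤ (s.nu d)⁻¹ := mul_le_of_le_one_right (inv_nonneg.mpr hν.le) (div_self_le_one _)

lemma sum_nu_mul_selbergWeight (hD : D ⊆ s.prodPrimes.divisors) (l : ℕ) :
    ∑ d ∈ s.prodPrimes.divisors, (if l ∣ d then s.nu d * selbergWeight s D d else 0) =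
      if l ∈ D then μ l * s.selbergTerms l / selbergMass s D else 0 := by
  have hweight : ∀ d ∈ s.prodPrimes.divisors, s.nu d * selbergWeight s D d =
      (∑ k ∈ D with d ∣ k, μ d * s.selbergTerms k) / selbergMass s D := fun d hd ↦ by
    have := (nu_pos_of_dvd_prodPrimes (Nat.dvd_of_mem_divisors hd)).ne'
    rw [selbergWeight, ← mul_sum]
    field_simp
  have hmoebius : ∀ k ∈ D, ∑ d ∈ s.prodPrimes.divisors with l ∣ d ∧ d ∣ k, (μ d : ℝ) =
      if k = l then (μ l : ℝ) else 0 := fun k hk ↦ by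
    have hkP := Nat.dvd_of_mem_divisors (hD hk)
    have hfilter : {d ∈ s.prodPrimes.divisors | l ∣ d ∧ d ∣ k} = {d ∈ k.divisors | l ∣ d} := by
      rw [← Nat.divisors_filter_dvd_of_dvd prodPrimes_ne_zero hkP, filter_filter]
      simp only [and_comm]
    rw [hfilter]
    exact_mod_cast sum_moebius_divisors_filter_dvd (squarefree_of_dvd_prodPrimes hkP) l
  calc ∑ d ∈ s.prodPrimes.divisors, (if l ∣ d then s.nu d * selbergWeight s D d else 0)
      = ∑ d ∈ s.prodPrimes.divisors, ∑ k ∈ D,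
          (if l ∣ d ∧ d ∣ k then (μ d : ℝ) else 0) * (s.selbergTerms k / selbergMass s D) := by
        refine sum_congr rfl fun d hd ↦ ?_
        rw [hweight d hd, sum_filter, sum_div]
        split_ifs with hld
        · refine sum_congr rfl fun k _ ↦ ?_
          simp only [hld, true_and]
          split_ifs <;> ring
        · simp [hld]
    _ = ∑ k ∈ D, (if k = l then (μ l : ℝ) else 0) * (s.selbergTerms k / selbergMass s D) := by
        rw [sum_comm]
        refine sum_congr rfl fun k hk ↦ ?_
        rw [← sum_mul, ← sum_filter, hmoebius k hk]
    _ = if l ∈ D then μ l * s.selbergTerms l / selbergMass s D else 0 := by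
        simp only [ite_mul, zero_mul, sum_ite_eq', mul_div_assoc]

lemma mainSum_lambdaSquared_selbergWeight (hD : D ⊆ s.prodPrimes.divisors) :
    s.mainSum (lambdaSquared (selbergWeight s D)) = (selbergMass s D)⁻¹ := by
  have hterm : ∀ l ∈ D, (s.selbergTerms l)⁻¹ * (μ l * s.selbergTerms l / selbergMass s D) ^ 2 =
      s.selbergTerms l / selbergMass s D ^ 2 := fun l hl ↦ by
    have hlP := Nat.dvd_of_mem_divisors (hD hl)
    have hμ : (μ l : ℝ) ^ 2 = 1 := mod_cast
      moebius_sq_eq_one_of_squarefree (squarefree_of_dvd_prodPrimes hlP)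
    have := (selbergTerms_pos hlP).ne'
    rw [div_pow, mul_pow, hμ]
    field_simp
  simp only [mainSum_lambdaSquared_eq_sum_mul_sum_sq, sum_nu_mul_selbergWeight hD, ite_pow,
    zero_pow two_ne_zero, mul_ite, mul_zero]
  rw [sum_ite_mem, inter_eq_right.mpr hD, sum_congr rfl hterm, ← sum_div]
  change selbergMass s D / selbergMass s D ^ 2 = _
  rw [sq, div_self_mul_self']

lemma errSum_lambdaSquared_le (w : ℕ → ℝ) {C : ℝ} (hC : ∀ d, d ∣ s.prodPrimes → |s.rem d| ≤ C) :
    s.errSum (lambdaSquared w) ≤ C * (∑ d ∈ s.prodPrimes.divisors, |w d|) ^ 2 := by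
  have hC0 : 0 ≤ C := (abs_nonneg _).trans (hC 1 (one_dvd _))
  have hle : ∀ d ∈ s.prodPrimes.divisors, |lambdaSquared w d| ≤
      ∑ d₁ ∈ s.prodPrimes.divisors, ∑ d₂ ∈ s.prodPrimes.divisors,
        if d = d₁.lcm d₂ then |w d₁| * |w d₂| else 0 := fun d hd ↦ by
    have hsub := Nat.divisors_subset_of_dvd prodPrimes_ne_zero (Nat.dvd_of_mem_divisors hd)
    calc |lambdaSquared w d|
        ≤ ∑ d₁ ∈ d.divisors, ∑ d₂ ∈ d.divisors,
            |if d = d₁.lcm d₂ then w d₁ * w d₂ else 0| :=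
          (abs_sum_le_sum_abs _ _).trans (sum_le_sum fun _ _ ↦ abs_sum_le_sum_abs _ _)
      _ ≤ ∑ d₁ ∈ s.prodPrimes.divisors, ∑ d₂ ∈ s.prodPrimes.divisors,
            |if d = d₁.lcm d₂ then w d₁ * w d₂ else 0| :=
          (sum_le_sum fun _ _ ↦ sum_le_sum_of_subset_of_nonneg hsub fun _ _ _ ↦ abs_nonneg _).trans
            (sum_le_sum_of_subset_of_nonneg hsub fun _ _ _ ↦ sum_nonneg fun _ _ ↦ abs_nonneg _)
      _ = _ := by simp only [apply_ite abs, abs_mul, abs_zero]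
  calc s.errSum (lambdaSquared w)
      ≤ ∑ d ∈ s.prodPrimes.divisors, (∑ d₁ ∈ s.prodPrimes.divisors, ∑ d₂ ∈ s.prodPrimes.divisors,
          if d = d₁.lcm d₂ then |w d₁| * |w d₂| else 0) * C :=
        sum_le_sum fun d hd ↦ mul_le_mul (hle d hd) (hC d (Nat.dvd_of_mem_divisors hd))
          (abs_nonneg _) ((abs_nonneg _).trans (hle d hd))
    _ = C * ∑ d₁ ∈ s.prodPrimes.divisors, ∑ d₂ ∈ s.prodPrimes.divisors,
          if d₁.lcm d₂ ∈ s.prodPrimes.divisors then |w d₁| * |w d₂| else 0 := by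
        rw [← sum_mul, mul_comm, sum_comm]
        congr 1
        refine sum_congr rfl fun d₁ _ ↦ ?_
        rw [sum_comm]
        simp only [sum_ite_eq']
    _ ≤ C * ∑ d₁ ∈ s.prodPrimes.divisors, ∑ d₂ ∈ s.prodPrimes.divisors, |w d₁| * |w d₂| := by
        gcongr
        split_ifs
        exacts [le_rfl, by positivity]
    _ = C * (∑ d ∈ s.prodPrimes.divisors, |w d|) ^ 2 := by rw [sq, sum_mul_sum]

theorem siftedSum_le_div_selbergMass_add (hD : D ⊆ s.prodPrimes.divisors) (hne : D.Nonempty)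
    {C : ℝ} (hC : ∀ d, d ∣ s.prodPrimes → |s.rem d| ≤ C) :
    s.siftedSum ≤ s.totalMass / selbergMass s D +
      C * (∑ d ∈ s.prodPrimes.divisors, |selbergWeight s D d|) ^ 2 := by
  have hupper := upperMoebius_lambdaSquared _ (selbergWeight_one (selbergMass_pos hD hne).ne')
  calc s.siftedSum
      ≤ s.totalMass * s.mainSum (lambdaSquared (selbergWeight s D)) +
          s.errSum (lambdaSquared (selbergWeight s D)) :=
        siftedSum_le_mainSum_errSum_of_upperMoebius _ hupper
    _ ≤ _ := by
        rw [mainSum_lambdaSquared_selbergWeight hD, ← div_eq_mul_inv]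
        gcongr
        exact errSum_lambdaSquared_le _ hC

end OptimalWeights

section IntervalSieve

open ArithmeticFunction BoundingSieve
open scoped ArithmeticFunction.zeta

lemma abs_card_filter_dvd_Ico_sub_le (a H : ℕ) {r : ℕ} (hr : 0 < r) :
    |(#{n ∈ Ico a (a + H) | r ∣ n} : ℝ) - H / r| ≤ 1 := by
  have hcard : (#{n ∈ Ico a (a + H) | r ∣ n} : ℤ) = ⌈((a + H : ℕ) / r : ℚ)⌉ - ⌈(a / r : ℚ)⌉ := by
    have h := Nat.Ico_filter_modEq_card a (a + H) hr 0
    simp only [Nat.modEq_zero_iff_dvd, Nat.cast_zero, sub_zero] at h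
    rw [h, max_eq_left]
    exact sub_nonneg.mpr (Int.ceil_mono (by gcongr; exact Nat.le_add_right a H))
  have hrat : |(#{n ∈ Ico a (a + H) | r ∣ n} : ℚ) - H / r| ≤ 1 := by
    rw [← Int.cast_natCast #_, hcard, abs_le]
    push_cast [add_div]
    constructor <;>
      linarith [Int.le_ceil ((a / r : ℚ) + H / r), Int.ceil_lt_add_one ((a / r : ℚ) + H / r),
        Int.le_ceil (a / r : ℚ), Int.ceil_lt_add_one (a / r : ℚ)]
  simpa using (Rat.cast_le (K := ℝ)).mpr hrat

lemma log_add_one_le_sum_inv_squarefree (R : ℕ) :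
    Real.log (R + 1) ≤ Real.pi ^ 2 / 6 * ∑ k ∈ Icc 1 R with Squarefree k, (k : ℝ)⁻¹ := by
  choose k b hkb hk using Nat.sq_mul_squarefree
  have hinj : Set.InjOn (fun n ↦ (b n, k n)) (Icc 1 R : Set ℕ) := fun n _ n' _ h ↦ by
    simp only [Prod.mk.injEq] at h
    rw [← hkb n, ← hkb n', h.1, h.2]
  have himage : (Icc 1 R).image (fun n ↦ (b n, k n)) ⊆
      Icc 1 R ×ˢ {k ∈ Icc 1 R | Squarefree k} := by
    refine image_subset_iff.mpr fun n hn ↦ ?_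
    have hn0 : n ≠ 0 := Nat.one_le_iff_ne_zero.mp (mem_Icc.mp hn).1
    have hbn : b n ∣ n := ⟨b n * k n, by rw [← mul_assoc, ← sq, hkb]⟩
    have hkn : k n ∣ n := ⟨b n ^ 2, by rw [mul_comm, hkb]⟩
    have hmem : ∀ {d}, d ∣ n → d ∈ Icc 1 R := fun hd ↦
      mem_Icc.mpr ⟨Nat.pos_of_dvd_of_pos hd (Nat.pos_of_ne_zero hn0),
        (Nat.le_of_dvd (Nat.pos_of_ne_zero hn0) hd).trans (mem_Icc.mp hn).2⟩
    exact mem_product.mpr ⟨hmem hbn, mem_filter.mpr ⟨hmem hkn, hk n⟩⟩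
  have hzeta : ∑ b ∈ Icc 1 R, 1 / (b : ℝ) ^ 2 ≤ Real.pi ^ 2 / 6 :=
    sum_le_hasSum _ (fun _ _ ↦ by positivity) hasSum_zeta_two
  calc Real.log (R + 1)
      ≤ ∑ n ∈ Icc 1 R, (n : ℝ)⁻¹ := by
        simpa [harmonic_eq_sum_Icc] using log_add_one_le_harmonic R
    _ = ∑ q ∈ (Icc 1 R).image (fun n ↦ (b n, k n)), 1 / (q.1 : ℝ) ^ 2 * (q.2 : ℝ)⁻¹ := by
        rw [sum_image hinj]
        refine sum_congr rfl fun n _ ↦ ?_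
        rw [one_div, ← mul_inv]
        exact_mod_cast congrArg (fun d : ℕ ↦ (d : ℝ)⁻¹) (hkb n).symm
    _ ≤ ∑ q ∈ Icc 1 R ×ˢ {k ∈ Icc 1 R | Squarefree k}, 1 / (q.1 : ℝ) ^ 2 * (q.2 : ℝ)⁻¹ :=
        sum_le_sum_of_subset_of_nonneg himage fun _ _ _ ↦ by positivity
    _ = (∑ b ∈ Icc 1 R, 1 / (b : ℝ) ^ 2) * ∑ k ∈ Icc 1 R with Squarefree k, (k : ℝ)⁻¹ := by
        rw [sum_product, sum_mul_sum]
    _ ≤ _ := by gcongr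

lemma coprime_primorial_of_lt_minFac {R n : ℕ} (h : R < n.minFac) : (primorial R).Coprime n :=
  Nat.coprime_of_dvd fun _ hp hpR hpn ↦
    (h.trans_le (Nat.minFac_le_of_dvd hp.two_le hpn)).not_ge (hp.dvd_primorial_iff.mp hpR)

lemma eq_of_isPrimePow_of_minFac_eq {m n : ℕ} (hm : IsPrimePow m) (hn : IsPrimePow n)
    (h : m.minFac = n.minFac) (hmn : m ≤ n) (hlt : n < 2 * m) : m = n := by
  obtain ⟨p, s, hp, hs, rfl⟩ := hm
  obtain ⟨q, t, hq, ht, rfl⟩ := hn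
  rw [hp.nat_prime.pow_minFac hs.ne', hq.nat_prime.pow_minFac ht.ne'] at h
  subst h
  have hp2 := hp.nat_prime.two_le
  obtain hst | hst := ((Nat.pow_le_pow_iff_right hp2).mp hmn).eq_or_lt
  · rw [hst]
  · have : 2 * p ^ s ≤ p ^ t := calc
      2 * p ^ s ≤ p * p ^ s := Nat.mul_le_mul_right _ hp2
      _ = p ^ (s + 1) := (pow_succ' p s).symm
      _ ≤ p ^ t := Nat.pow_le_pow_right hp.nat_prime.pos hst
    exact absurd hlt this.not_gt

/-- The sieve problem of removing from the interval `[a, a + H)` the multiples of the primes up to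
`R`; the density at `d` is `1 / d`. -/
noncomputable def intervalSieve (R a H : ℕ) : BoundingSieve where
  support := Ico a (a + H)
  prodPrimes := primorial R
  prodPrimes_squarefree := squarefree_primorial R
  weights _ := 1
  weights_nonneg _ := zero_le_one
  totalMass := H
  nu := pdiv (ζ : ArithmeticFunction ℝ) (ArithmeticFunction.id : ArithmeticFunction ℕ)
  nu_mult := isMultiplicative_zeta.natCast.pdiv isMultiplicative_id.natCast
  nu_pos_of_prime p hp _ := by simp [hp.ne_zero, hp.pos]
  nu_lt_one_of_prime p hp _ := by
    simpa [hp.ne_zero] using inv_lt_one_of_one_lt₀ (Nat.one_lt_cast.mpr hp.one_lt)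

lemma intervalSieve_nu (R a H d : ℕ) : (intervalSieve R a H).nu d = (d : ℝ)⁻¹ := by
  obtain rfl | hd := eq_or_ne d 0 <;> simp_all [intervalSieve]

lemma abs_rem_intervalSieve_le (R a H : ℕ) {d : ℕ} (hd : 0 < d) :
    |(intervalSieve R a H).rem d| ≤ 1 := by
  have := abs_card_filter_dvd_Ico_sub_le a H hd
  rwa [rem, intervalSieve_nu, multSum, ← sum_filter, intervalSieve, sum_const, nsmul_one,
    inv_mul_eq_div]

lemma filter_squarefree_Icc_subset_divisors_primorial (R : ℕ) :
    {k ∈ Icc 1 R | Squarefree k} ⊆ (primorial R).divisors := fun k hk ↦ by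
  obtain ⟨hk, hsq⟩ := mem_filter.mp hk
  exact Nat.mem_divisors.mpr
    ⟨hsq.dvd_primorial.trans (primorial_dvd_primorial (mem_Icc.mp hk).2), primorial_ne_zero R⟩

lemma log_add_one_le_selbergMass_intervalSieve (R a H : ℕ) :
    Real.log (R + 1) ≤
      Real.pi ^ 2 / 6 * selbergMass (intervalSieve R a H) {k ∈ Icc 1 R | Squarefree k} := by
  refine (log_add_one_le_sum_inv_squarefree R).trans ?_
  refine mul_le_mul_of_nonneg_left (sum_le_sum fun k hk ↦ ?_) (by positivity)
  have hkP : k ∣ (intervalSieve R a H).prodPrimes :=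
    Nat.dvd_of_mem_divisors (filter_squarefree_Icc_subset_divisors_primorial R hk)
  rw [← intervalSieve_nu R a H, selbergTerms_apply]
  refine le_mul_of_one_le_right (nu_pos_of_dvd_prodPrimes hkP).le (one_le_prod fun p hp ↦ ?_)
  have hpP := (Nat.dvd_of_mem_primeFactors hp).trans hkP
  have hpp := Nat.prime_of_mem_primeFactors hp
  exact (one_le_inv₀ (sub_pos.mpr ((intervalSieve R a H).nu_lt_one_of_prime p hpp hpP))).mpr
    (sub_le_self _ (nu_pos_of_dvd_prodPrimes hpP).le)

lemma sum_abs_selbergWeight_intervalSieve_le (R a H : ℕ) :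
    ∑ d ∈ (intervalSieve R a H).prodPrimes.divisors,
      |selbergWeight (intervalSieve R a H) {k ∈ Icc 1 R | Squarefree k} d| ≤ R * (R + 1) / 2 := by
  set w := selbergWeight (intervalSieve R a H) {k ∈ Icc 1 R | Squarefree k}
  have hle : ∀ d ∈ (intervalSieve R a H).prodPrimes.divisors,
      |w d| ≤ if d ∈ range (R + 1) then (d : ℝ) else 0 := fun d hd ↦ by
    split_ifs with hdR
    · simpa [intervalSieve_nu] using abs_selbergWeight_le (s := intervalSieve R a H)
        (filter_squarefree_Icc_subset_divisors_primorial R) (Nat.dvd_of_mem_divisors hd)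
    · refine (abs_eq_zero.mpr (selbergWeight_eq_zero fun l hl hdl ↦ hdR ?_)).le
      have hl := mem_Icc.mp (mem_of_mem_filter l hl)
      exact mem_range_succ_iff.mpr ((Nat.le_of_dvd hl.1 hdl).trans hl.2)
  have hgauss : ∑ d ∈ range (R + 1), (d : ℝ) = R * (R + 1) / 2 := by
    rw [eq_div_iff two_ne_zero, mul_comm (R : ℝ), ← Nat.cast_sum]
    exact_mod_cast sum_range_id_mul_two (R + 1)
  calc ∑ d ∈ (intervalSieve R a H).prodPrimes.divisors, |w d|
      ≤ ∑ d ∈ (intervalSieve R a H).prodPrimes.divisors ∩ range (R + 1), (d : ℝ) := by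
        rw [← sum_ite_mem]
        exact sum_le_sum hle
    _ ≤ R * (R + 1) / 2 := hgauss ▸
        sum_le_sum_of_subset_of_nonneg inter_subset_right fun d _ _ ↦ Nat.cast_nonneg d

lemma siftedSum_intervalSieve_le {R : ℕ} (hR : 1 ≤ R) (a H : ℕ) :
    (intervalSieve R a H).siftedSum ≤
      Real.pi ^ 2 / 6 * H / Real.log (R + 1) + (R * (R + 1) / 2) ^ 2 := by
  have hD : {k ∈ Icc 1 R | Squarefree k} ⊆ (intervalSieve R a H).prodPrimes.divisors :=
    filter_squarefree_Icc_subset_divisors_primorial R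
  have hne : ({k ∈ Icc 1 R | Squarefree k} : Finset ℕ).Nonempty :=
    ⟨1, mem_filter.mpr ⟨mem_Icc.mpr ⟨le_rfl, hR⟩, squarefree_one⟩⟩
  have hrem : ∀ d, d ∣ (intervalSieve R a H).prodPrimes → |(intervalSieve R a H).rem d| ≤ 1 :=
    fun d hd ↦ abs_rem_intervalSieve_le R a H (Nat.pos_of_dvd_of_pos hd (primorial_pos R : 0 < _))
  have hlog : 0 < Real.log (R + 1) := Real.log_pos (by norm_cast; lia)
  have hmain : H / selbergMass (intervalSieve R a H) {k ∈ Icc 1 R | Squarefree k} ≤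
      Real.pi ^ 2 / 6 * H / Real.log (R + 1) := by
    rw [div_le_div_iff₀ (selbergMass_pos hD hne) hlog, mul_comm (Real.pi ^ 2 / 6), mul_assoc]
    exact mul_le_mul_of_nonneg_left (log_add_one_le_selbergMass_intervalSieve R a H)
      H.cast_nonneg
  refine (siftedSum_le_div_selbergMass_add hD hne hrem).trans ?_
  rw [one_mul]
  refine add_le_add hmain ?_
  gcongr
  exact sum_abs_selbergWeight_intervalSieve_le R a H

lemma card_primePow_lt_minFac_Ico_le (R a H : ℕ) :
    (#{n ∈ Ico a (a + H) | IsPrimePow n ∧ R < n.minFac} : ℝ) ≤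
      (intervalSieve R a H).siftedSum := by
  rw [siftedSum, ← sum_filter, intervalSieve, sum_const, nsmul_one]
  exact_mod_cast card_le_card <| monotone_filter_right _ fun _ _ hn ↦
    coprime_primorial_of_lt_minFac (And.right hn)

lemma card_primePow_minFac_le_Ico_le (R : ℕ) {a H : ℕ} (hH : H ≤ a) :
    #{n ∈ Ico a (a + H) | IsPrimePow n ∧ n.minFac ≤ R} ≤ R := by
  have hinj : Set.InjOn Nat.minFac ({n ∈ Ico a (a + H) | IsPrimePow n ∧ n.minFac ≤ R} : Finset ℕ) :=
    fun m hm n hn h ↦ by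
      simp only [mem_coe, mem_filter, mem_Ico] at hm hn
      obtain hmn | hnm := le_total m n
      · exact eq_of_isPrimePow_of_minFac_eq hm.2.1 hn.2.1 h hmn (by lia)
      · exact (eq_of_isPrimePow_of_minFac_eq hn.2.1 hm.2.1 h.symm hnm (by lia)).symm
  calc #{n ∈ Ico a (a + H) | IsPrimePow n ∧ n.minFac ≤ R}
      ≤ #(Icc 1 R) := card_le_card_of_injOn Nat.minFac
        (fun n hn ↦ mem_Icc.mpr ⟨n.minFac_pos, (mem_filter.mp hn).2.2⟩) hinj
    _ = R := Nat.card_Icc 1 R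

theorem card_primePow_Ico_le {R a H : ℕ} (hR : 2 ≤ R) (hH : H ≤ a) :
    (#{n ∈ Ico a (a + H) | IsPrimePow n} : ℝ) ≤
      Real.pi ^ 2 / 6 * H / Real.log (R + 1) + R ^ 4 := by
  have hsplit : #{n ∈ Ico a (a + H) | IsPrimePow n} =
      #{n ∈ Ico a (a + H) | IsPrimePow n ∧ R < n.minFac} +
        #{n ∈ Ico a (a + H) | IsPrimePow n ∧ n.minFac ≤ R} := by
    simp only [← filter_filter, ← not_lt]
    exact (card_filter_add_card_filter_not _).symm
  have hsmall : (#{n ∈ Ico a (a + H) | IsPrimePow n ∧ n.minFac ≤ R} : ℝ) ≤ R := mod_cast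
    card_primePow_minFac_le_Ico_le R hH
  have hlarge := (card_primePow_lt_minFac_Ico_le R a H).trans
    (siftedSum_intervalSieve_le (one_le_two.trans hR) a H)
  have herror : (R * (R + 1) / 2 : ℝ) ^ 2 + R ≤ R ^ 4 := by
    have hR' : (2 : ℝ) ≤ R := mod_cast hR
    have hR0 : (0 : ℝ) < R := two_pos.trans_le hR'
    nlinarith [sq_nonneg ((R : ℝ) - 2), pow_pos hR0 3]
  rw [hsplit]
  push_cast
  linarith

end IntervalSieve

section NearbyPrimePowers

/-- The proportion of prime powers that sieving by the primes up to `2 ^ i` allows in an interval of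
length at least `2 ^ (5 * i)`. The value at `0`, which is `1` because `2.4 / 0 = 0`, is the trivial
bound. -/
noncomputable def sieveDensity (i : ℕ) : ℝ := 2.4 / i + 1 / 2 ^ i

lemma card_primePow_Ico_two_pow_le {a k : ℕ} (hk : 2 ^ k ≤ a) :
    (#{n ∈ Ico a (a + 2 ^ k) | IsPrimePow n} : ℝ) ≤ 2 ^ k * sieveDensity (k / 5) := by
  set i := k / 5
  obtain hi | hi := Nat.eq_zero_or_pos i
  · have hcard : #{n ∈ Ico a (a + 2 ^ k) | IsPrimePow n} ≤ 2 ^ k := by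
      simpa using card_filter_le (Ico a (a + 2 ^ k)) IsPrimePow
    simpa [sieveDensity, hi] using (Nat.cast_le (α := ℝ)).mpr hcard
  · have hsieve := card_primePow_Ico_le (Nat.le_self_pow hi.ne' 2) hk
    have hlog : i * Real.log 2 ≤ Real.log ((2 ^ i : ℕ) + 1) := by
      rw [← Real.log_pow]
      exact Real.log_le_log (by positivity) (by push_cast; linarith)
    have hpi : Real.pi ^ 2 / 6 ≤ 2.4 * Real.log 2 := by
      nlinarith [Real.pi_lt_d2, Real.pi_pos, Real.log_two_gt_d9]
    have hmain : Real.pi ^ 2 / 6 * (2 ^ k : ℕ) / Real.log ((2 ^ i : ℕ) + 1) ≤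
        2 ^ k * (2.4 / i) := calc
      _ ≤ 2.4 * Real.log 2 * 2 ^ k / (i * Real.log 2) := by
        have := Real.log_pos one_lt_two
        push_cast at hlog ⊢
        gcongr
      _ = 2 ^ k * (2.4 / i) := by
        have := (Real.log_pos one_lt_two).ne'
        field_simp
    have herror : ((2 ^ i : ℕ) : ℝ) ^ 4 ≤ 2 ^ k * (1 / 2 ^ i) := by
      rw [mul_one_div, le_div_iff₀ (by positivity)]
      push_cast
      rw [← pow_succ, ← pow_mul]
      exact pow_le_pow_right₀ one_le_two (Nat.div_mul_le_self k 5)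
    rw [sieveDensity, mul_add]
    exact hsieve.trans (add_le_add hmain herror)

section Dyadic

variable {A : ℕ → Prop} [DecidablePred A]

lemma sum_Ico_two_pow_one_div_add_half_le (k : ℕ) :
    ∑ t ∈ Ico (2 ^ k) (2 ^ (k + 1)) with A t, 1 / (t + 1 / 2 : ℝ) ≤
      #{t ∈ Ico (2 ^ k) (2 ^ (k + 1)) | A t} / 2 ^ k := by
  rw [div_eq_mul_one_div (#_ : ℝ), ← nsmul_eq_mul]
  refine sum_le_card_nsmul _ _ _ fun t ht ↦ ?_
  have hkt : (2 : ℝ) ^ k ≤ t := mod_cast (mem_Ico.mp (mem_of_mem_filter t ht)).1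
  exact one_div_le_one_div_of_le (by positivity) (by linarith)

lemma sum_range_two_pow_one_div_add_half_le {c : ℕ → ℝ}
    (hc : ∀ k, (#{t ∈ Ico (2 ^ k) (2 ^ (k + 1)) | A t} : ℝ) ≤ 2 ^ k * c k) (K : ℕ) :
    ∑ t ∈ range (2 ^ K) with A t, 1 / (t + 1 / 2 : ℝ) ≤ 2 + ∑ k ∈ range K, c k := by
  induction K with
  | zero =>
    simp only [pow_zero, range_one, range_zero, sum_empty, sum_filter, sum_singleton]
    split_ifs <;> norm_num
  | succ K ih =>
    have hblock : ∑ t ∈ Ico (2 ^ K) (2 ^ (K + 1)) with A t, 1 / (t + 1 / 2 : ℝ) ≤ c K :=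
      (sum_Ico_two_pow_one_div_add_half_le K).trans ((div_le_iff₀' (by positivity)).mpr (hc K))
    rw [sum_filter, ← sum_range_add_sum_Ico _ (Nat.pow_le_pow_right two_pos K.le_succ),
      ← sum_filter, ← sum_filter, sum_range_succ, ← add_assoc]
    exact add_le_add ih hblock

lemma sum_range_mul_div {M : Type*} [AddCommMonoid M] {q : ℕ} (hq : 0 < q) (f : ℕ → M) (j : ℕ) :
    ∑ k ∈ range (q * j), f (k / q) = q • ∑ i ∈ range j, f i := by
  induction j with
  | zero => simp
  | succ j ih =>
    have hblock : ∑ r ∈ range q, f ((q * j + r) / q) = q • f j := by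
      rw [sum_congr rfl fun r hr ↦ by
        rw [Nat.mul_add_div hq, Nat.div_eq_of_lt (mem_range.mp hr), add_zero]]
      simp
    rw [Nat.mul_succ, sum_range_add, ih, hblock, sum_range_succ, smul_add]

end Dyadic

lemma harmonic_le_log_log {x : ℝ} {j : ℕ} (hj : 32 ^ j ≤ x) (hx : 1 ≤ Real.log x) :
    (harmonic j : ℝ) ≤ Real.log (Real.log x) := by
  obtain rfl | hj0 := eq_or_ne j 0
  · simpa using Real.log_nonneg hx
  · have hj0' : (0 : ℝ) < j := mod_cast Nat.pos_of_ne_zero hj0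
    have hlog32 : Real.exp 1 ≤ Real.log 32 := by
      rw [show (32 : ℝ) = 2 ^ 5 by norm_num, Real.log_pow]
      push_cast
      linarith [Real.exp_one_lt_d9, Real.log_two_gt_d9]
    have hexp : Real.exp 1 * j ≤ Real.log x := calc
      Real.exp 1 * j ≤ j * Real.log 32 := by rw [mul_comm]; gcongr
      _ = Real.log (32 ^ j) := by rw [Real.log_pow]
      _ ≤ Real.log x := Real.log_le_log (by positivity) hj
    calc (harmonic j : ℝ)
        ≤ 1 + Real.log j := harmonic_le_one_add_log j
      _ = Real.log (Real.exp 1 * j) := by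
        rw [Real.log_mul (Real.exp_ne_zero 1) hj0'.ne', Real.log_exp]
      _ ≤ Real.log (Real.log x) := Real.log_le_log (by positivity) hexp

lemma sum_sieveDensity_le (j : ℕ) :
    ∑ i ∈ range (j + 1), sieveDensity i ≤ 2 + 2.4 * harmonic j := by
  have hharmonic : ∑ i ∈ range (j + 1), (2.4 / i : ℝ) = 2.4 * harmonic j := by
    rw [sum_range_succ', harmonic]
    simp [div_eq_mul_inv, mul_sum]
  have hgeom : ∑ i ∈ range (j + 1), (1 / 2 ^ i : ℝ) ≤ 2 := by
    simpa only [one_div_pow] using sum_geometric_two_le (j + 1)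
  simp only [sieveDensity, sum_add_distrib]
  linarith

lemma sum_one_div_add_half_le_log_log {A : ℕ → Prop} [DecidablePred A]
    (hA : ∀ k, (#{t ∈ Ico (2 ^ k) (2 ^ (k + 1)) | A t} : ℝ) ≤ 2 ^ k * sieveDensity (k / 5))
    {m : ℕ} {x : ℝ} (hmx : m ≤ x) (hx : 1 ≤ Real.log x) :
    ∑ t ∈ range m with A t, 1 / (t + 1 / 2 : ℝ) ≤ 12 + 12 * Real.log (Real.log x) := by
  obtain rfl | hm := m.eq_zero_or_pos
  · have := Real.log_nonneg hx
    rw [range_zero, filter_empty, sum_empty]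
    positivity
  set j := Nat.log 32 m
  have hj : (32 : ℝ) ^ j ≤ x := le_trans (mod_cast Nat.pow_log_le_self 32 hm.ne') hmx
  have hm_le : m ≤ 2 ^ (5 * (j + 1)) := by
    rw [pow_mul]
    exact (Nat.lt_pow_succ_log_self (by norm_num) m).le
  calc ∑ t ∈ range m with A t, 1 / (t + 1 / 2 : ℝ)
      ≤ ∑ t ∈ range (2 ^ (5 * (j + 1))) with A t, 1 / (t + 1 / 2 : ℝ) :=
        sum_le_sum_of_subset_of_nonneg (filter_subset_filter _ (range_subset_range.mpr hm_le))
          fun _ _ _ ↦ by positivity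
    _ ≤ 2 + ∑ k ∈ range (5 * (j + 1)), sieveDensity (k / 5) :=
        sum_range_two_pow_one_div_add_half_le hA _
    _ = 2 + 5 * ∑ i ∈ range (j + 1), sieveDensity i := by
        rw [sum_range_mul_div (by norm_num), nsmul_eq_mul, Nat.cast_ofNat]
    _ ≤ 2 + 5 * (2 + 2.4 * harmonic j) := by gcongr; exact sum_sieveDensity_le j
    _ = 12 + 12 * harmonic j := by ring
    _ ≤ 12 + 12 * Real.log (Real.log x) := by gcongr; exact harmonic_le_log_log hj hx

variable {m : ℕ} {x : ℝ}

lemma sum_primePow_right_le (hmx : m ≤ x) (hx : 1 ≤ Real.log x) :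
    ∑ n ∈ Ioc m (2 * m) with IsPrimePow n, 1 / (n - (m + 1 / 2) : ℝ) ≤
      12 + 12 * Real.log (Real.log x) := by
  have hblock (k : ℕ) : (#{t ∈ Ico (2 ^ k) (2 ^ (k + 1)) | IsPrimePow (m + 1 + t)} : ℝ) ≤
      2 ^ k * sieveDensity (k / 5) := by
    refine le_trans (mod_cast card_le_card_of_injOn (m + 1 + ·) (fun t ht ↦ ?_)
      (add_right_injective _).injOn) (card_primePow_Ico_two_pow_le (a := m + 1 + 2 ^ k) (by lia))
    simp only [coe_filter, Set.mem_ofPred_eq, mem_Ico, pow_succ] at ht ⊢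
    exact ⟨by lia, ht.2⟩
  refine le_of_eq_of_le ?_ (sum_one_div_add_half_le_log_log hblock hmx hx)
  refine sum_nbij' (· - (m + 1)) (m + 1 + ·) ?_ ?_ ?_ ?_ ?_ <;>
    simp only [mem_filter, mem_Ioc, mem_range]
  · exact fun n hn ↦ ⟨by lia, by rw [Nat.add_sub_cancel' hn.1.1]; exact hn.2⟩
  · exact fun t ht ↦ ⟨by lia, ht.2⟩
  · lia
  · lia
  · intro n hn
    rw [Nat.cast_sub hn.1.1]
    push_cast
    ring

lemma sum_primePow_left_le (hmx : m ≤ x) (hx : 1 ≤ Real.log x) :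
    ∑ n ∈ Ioc (2 * m / 3) m with IsPrimePow n, 1 / (m + 1 / 2 - n : ℝ) ≤
      12 + 12 * Real.log (Real.log x) := by
  have hblock (k : ℕ) :
      (#{t ∈ Ico (2 ^ k) (2 ^ (k + 1)) | IsPrimePow (m - t) ∧ 3 * t < m} : ℝ) ≤
        2 ^ k * sieveDensity (k / 5) := by
    by_cases hk : 3 * 2 ^ k < m
    · refine le_trans
        (mod_cast card_le_card_of_injOn (m - ·) (fun t ht ↦ ?_) fun t ht t' ht' h ↦ ?_)
        (card_primePow_Ico_two_pow_le (a := m + 1 - 2 * 2 ^ k) (by lia)) <;>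
      simp only [coe_filter, Set.mem_ofPred_eq, mem_Ico, pow_succ] at *
      · exact ⟨by lia, ht.2.1⟩
      · lia
    · rw [filter_false_of_mem fun t ht h ↦ hk (by linarith [(mem_Ico.mp ht).1]), card_empty,
        Nat.cast_zero, sieveDensity]
      positivity
  refine le_of_eq_of_le ?_ (sum_one_div_add_half_le_log_log hblock hmx hx)
  refine sum_nbij' (m - ·) (m - ·) ?_ ?_ ?_ ?_ ?_ <;>
    simp only [mem_filter, mem_Ioc, mem_range]
  · exact fun n hn ↦ ⟨by lia, by rw [Nat.sub_sub_self hn.1.2]; exact hn.2, by lia⟩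
  · exact fun t ht ↦ ⟨by lia, ht.2.1⟩
  · lia
  · lia
  · intro n hn
    rw [Nat.cast_sub hn.1.2]
    ring

end NearbyPrimePowers

section Zeta

open ArithmeticFunction

variable {s : ℝ}

lemma riemannZeta_re_eq_tsum (hs : 1 < s) :
    (riemannZeta s).re = ∑' n : ℕ, 1 / (n + 1 : ℝ) ^ s := by
  rw [zeta_eq_tsum_one_div_nat_add_one_cpow (by simpa using hs),
    ← Complex.ofReal_re (∑' n : ℕ, 1 / (n + 1 : ℝ) ^ s), Complex.ofReal_tsum]
  congr! 3 with n
  rw [Complex.ofReal_div, Complex.ofReal_cpow (by positivity)]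
  push_cast
  rfl

lemma riemannZeta_re_le (hs : 1 < s) : (riemannZeta s).re ≤ s / (s - 1) := by
  have haux := ZetaAsymptotics.zeta_limit_aux1 hs
  have hterms : 0 ≤ s * ZetaAsymptotics.termTSum s :=
    mul_nonneg (by linarith) (tsum_nonneg fun n ↦ ZetaAsymptotics.term_nonneg (n + 1) s)
  have hsplit : s / (s - 1) = 1 + 1 / (s - 1) := by
    rw [one_add_div (sub_pos.mpr hs).ne', sub_add_cancel]
  rw [riemannZeta_re_eq_tsum hs, hsplit]
  linarith

/-- The `n`-th term of the series for `log ζ(s)`. -/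
noncomputable def logZetaTerm (s : ℝ) (n : ℕ) : ℝ := Λ n / (n ^ s * Real.log n)

lemma logZetaTerm_nonneg (s : ℝ) (n : ℕ) : 0 ≤ logZetaTerm s n :=
  div_nonneg vonMangoldt_nonneg (mul_nonneg (by positivity) (Real.log_natCast_nonneg n))

lemma summable_logZetaTerm (hs : 1 < s) : Summable (logZetaTerm s) := by
  refine Summable.of_nonneg_of_le (logZetaTerm_nonneg s) (fun n ↦ ?_)
    (Real.summable_one_div_nat_rpow.mpr hs)
  rw [logZetaTerm, mul_comm, ← div_div]
  gcongr
  exact div_le_one_of_le₀ vonMangoldt_le_log (Real.log_natCast_nonneg n)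

lemma tsum_logZetaTerm_le (hs : 1 < s) : ∑' n, logZetaTerm s n ≤ Real.log (s / (s - 1)) := by
  simp only [logZetaTerm]
  rw [← log_riemannZeta_eq hs]
  exact Real.log_le_log (riemannZeta_re_pos_of_one_lt hs) (riemannZeta_re_le hs)

end Zeta

section PerronSeries

open ArithmeticFunction

/-- The factor of the `n`-th term of the Perron error series that does not depend on `T`. -/
noncomputable def perronWeight (x : ℝ) (n : ℕ) : ℝ :=
  (x / n) ^ (1 / Real.log x) * (Λ n / (n * Real.log n))

variable {x : ℝ} {n : ℕ}

lemma perronWeight_eq_zero (hn : ¬ IsPrimePow n) : perronWeight x n = 0 := by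
  rw [perronWeight, vonMangoldt_eq_zero_iff.mpr hn, zero_div, mul_zero]

lemma perronWeight_nonneg (hx : 0 ≤ x) (n : ℕ) : 0 ≤ perronWeight x n :=
  mul_nonneg (by positivity)
    (div_nonneg vonMangoldt_nonneg (mul_nonneg n.cast_nonneg (Real.log_natCast_nonneg n)))

lemma perronWeight_le_exp_mul (hx : 0 ≤ x) (n : ℕ) :
    perronWeight x n ≤ Real.exp 1 * logZetaTerm (1 + 1 / Real.log x) n := by
  obtain rfl | hn := n.eq_zero_or_pos
  · simp [perronWeight, logZetaTerm]
  have hn0 : (0 : ℝ) < n := mod_cast hn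
  calc perronWeight x n
      = x ^ (Real.log x)⁻¹ * logZetaTerm (1 + 1 / Real.log x) n := by
        rw [perronWeight, logZetaTerm, Real.div_rpow hx hn0.le, Real.rpow_add hn0,
          Real.rpow_one, one_div]
        ring
    _ ≤ _ := by
        gcongr
        exacts [logZetaTerm_nonneg _ _, Real.rpow_inv_log_le_exp_one]

lemma perronWeight_le_rpow_div (hx : 0 ≤ x) (n : ℕ) :
    perronWeight x n ≤ (x / n) ^ (1 / Real.log x) / n := by
  rw [perronWeight, mul_comm (n : ℝ), ← div_div, ← mul_div_assoc]
  gcongr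
  exact mul_le_of_le_one_right (by positivity)
    (div_le_one_of_le₀ vonMangoldt_le_log (Real.log_natCast_nonneg n))

lemma perronWeight_div_abs_log_le_of_far (hx : 0 ≤ x)
    (hfar : Real.log (3 / 2) ≤ |Real.log (x / n)|) :
    perronWeight x n / |Real.log (x / n)| ≤
      6.71 * logZetaTerm (1 + 1 / Real.log x) n := by
  have hlog : Real.exp 1 ≤ 6.71 * Real.log (3 / 2) := by
    rw [Real.log_div three_ne_zero two_ne_zero]
    linarith [Real.exp_one_lt_d9, Real.log_three_gt_d9, Real.log_two_lt_d9]
  have := logZetaTerm_nonneg (1 + 1 / Real.log x) n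
  rw [div_le_iff₀ ((Real.log_pos (by norm_num)).trans_le hfar), mul_right_comm]
  refine (perronWeight_le_exp_mul hx n).trans ?_
  gcongr
  linarith

lemma perronWeight_div_abs_log_le_of_lt (hx : 1 ≤ x) (hn : x < n) :
    perronWeight x n / |Real.log (x / n)| ≤ 1 / (n - x) := by
  have hx0 : 0 < x := by linarith
  have hn0 : 0 < (n : ℝ) := by linarith
  have hlog : (n - x) / n ≤ |Real.log (x / n)| := by
    have := Real.log_le_sub_one_of_pos (div_pos hx0 hn0)
    rw [sub_div, div_self hn0.ne']
    linarith [neg_le_abs (Real.log (x / n))]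
  have hweight : perronWeight x n ≤ 1 / n := by
    refine (perronWeight_le_rpow_div hx0.le n).trans ?_
    gcongr
    exact Real.rpow_le_one (by positivity) ((div_le_one hn0).mpr hn.le)
      (one_div_nonneg.mpr (Real.log_nonneg hx))
  have hgap : 0 < n - x := sub_pos.mpr hn
  calc perronWeight x n / |Real.log (x / n)|
      ≤ (1 / n) / ((n - x) / n) := by gcongr
    _ = 1 / (n - x) := by field_simp

lemma rpow_one_div_log_le {y : ℝ} (hx : 1.25 ≤ Real.log x) (hy : 0 ≤ y) (hy' : y ≤ 3 / 2) :
    y ^ (1 / Real.log x) ≤ 1.4 := by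
  have hexp : 1 / Real.log x ≤ 0.8 := by
    rw [div_le_iff₀ (by linarith)]
    linarith
  have hexp0 : 0 ≤ 1 / Real.log x := by positivity
  calc y ^ (1 / Real.log x) ≤ (1 + 1 / 2) ^ (1 / Real.log x) := by gcongr; linarith
    _ ≤ 1 + 1 / Real.log x * (1 / 2) :=
      rpow_one_add_le_one_add_mul_self (by norm_num) hexp0 (by linarith)
    _ ≤ 1.4 := by linarith

lemma perronWeight_div_abs_log_le_of_gt (hx : 1.25 ≤ Real.log x) (hn : n < x)
    (hxn : x < 3 / 2 * n) :
    perronWeight x n / |Real.log (x / n)| ≤ 1.75 * (1 / (x - n)) := by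
  have hn0 : (0 : ℝ) < n := by linarith
  have hx0 : 0 < x := by linarith
  have hgap : 0 < x - n := sub_pos.mpr hn
  have hlog : 2 * (x - n) / (x + n) ≤ |Real.log (x / n)| := by
    have := Real.le_log_one_add_of_nonneg (div_nonneg hgap.le hn0.le)
    rw [show 1 + (x - n) / n = x / n by field_simp; ring] at this
    refine le_trans (le_of_eq ?_) (this.trans (le_abs_self _))
    field_simp
    ring
  have hweight : perronWeight x n ≤ 1.4 / n := by
    refine (perronWeight_le_rpow_div hx0.le n).trans ?_
    gcongr
    exact rpow_one_div_log_le hx (by positivity) ((div_le_iff₀ hn0).mpr hxn.le)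
  have hratio : (x + n) / n ≤ 5 / 2 := by
    rw [div_le_iff₀ hn0]
    linarith
  calc perronWeight x n / |Real.log (x / n)|
      ≤ (1.4 / n) / (2 * (x - n) / (x + n)) := by gcongr
    _ = 0.7 * ((x + n) / n) * (1 / (x - n)) := by field_simp; norm_num
    _ ≤ 0.7 * (5 / 2) * (1 / (x - n)) := by gcongr
    _ = 1.75 * (1 / (x - n)) := by norm_num

lemma lt_three_halves_mul_of_abs_log_lt {y z : ℝ} (hy : 0 < y) (hz : 0 < z)
    (h : |Real.log (y / z)| < Real.log (3 / 2)) : y < 3 / 2 * z := by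
  rw [← div_lt_iff₀ hz, ← Real.log_lt_log_iff (by positivity) (by norm_num)]
  exact (le_abs_self _).trans_lt h

/-- The reciprocal distance from `m + 1 / 2` to `n`, for prime powers `n` of `(m, 2m]`. This range
contains every `n > m` with `log (n / (m + 1 / 2)) < log (3 / 2)`. -/
noncomputable def rightMajorant (m n : ℕ) : ℝ :=
  if n ∈ {k ∈ Ioc m (2 * m) | IsPrimePow k} then 1 / (n - (m + 1 / 2) : ℝ) else 0

/-- The reciprocal distance from `m + 1 / 2` to `n`, for prime powers `n` of `(2m / 3, m]`. This
range contains every `n ≤ m` with `log ((m + 1 / 2) / n) < log (3 / 2)`. -/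
noncomputable def leftMajorant (m n : ℕ) : ℝ :=
  if n ∈ {k ∈ Ioc (2 * m / 3) m | IsPrimePow k} then 1 / (m + 1 / 2 - n : ℝ) else 0

lemma rightMajorant_nonneg (m n : ℕ) : 0 ≤ rightMajorant m n := by
  rw [rightMajorant]
  split_ifs with hn
  · have : (m + 1 : ℝ) ≤ n := mod_cast (mem_Ioc.mp (mem_of_mem_filter n hn)).1
    exact one_div_nonneg.mpr (by linarith)
  · exact le_rfl

lemma leftMajorant_nonneg (m n : ℕ) : 0 ≤ leftMajorant m n := by
  rw [leftMajorant]
  split_ifs with hn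
  · have : (n : ℝ) ≤ m := mod_cast (mem_Ioc.mp (mem_of_mem_filter n hn)).2
    exact one_div_nonneg.mpr (by linarith)
  · exact le_rfl

variable {m : ℕ}

lemma perronWeight_div_abs_log_le_rightMajorant (hm : 0 < m) (hn : IsPrimePow n) (hmn : m < n)
    (hnear : |Real.log ((m + 1 / 2) / n)| < Real.log (3 / 2)) :
    perronWeight (m + 1 / 2) n / |Real.log ((m + 1 / 2) / n)| ≤ rightMajorant m n := by
  have hm' : (1 : ℝ) ≤ m := mod_cast hm
  have hmn' : (m + 1 : ℝ) ≤ n := mod_cast hmn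
  have hnx : n < 3 / 2 * (m + 1 / 2 : ℝ) := by
    rw [← inv_div, Real.log_inv, abs_neg] at hnear
    exact lt_three_halves_mul_of_abs_log_lt (by linarith) (by linarith) hnear
  have hn2m : n < 2 * m + 1 := by
    rify
    linarith
  rw [rightMajorant, if_pos (mem_filter.mpr ⟨mem_Ioc.mpr ⟨hmn, by lia⟩, hn⟩)]
  exact perronWeight_div_abs_log_le_of_lt (by linarith) (by linarith)

lemma perronWeight_div_abs_log_le_leftMajorant (hx : 1.25 ≤ Real.log (m + 1 / 2))
    (hn : IsPrimePow n) (hnm : n ≤ m)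
    (hnear : |Real.log ((m + 1 / 2) / n)| < Real.log (3 / 2)) :
    perronWeight (m + 1 / 2) n / |Real.log ((m + 1 / 2) / n)| ≤ 1.75 * leftMajorant m n := by
  have hn0 : (0 : ℝ) < n := mod_cast hn.pos
  have hnm' : (n : ℝ) ≤ m := mod_cast hnm
  have hxn : m + 1 / 2 < 3 / 2 * (n : ℝ) :=
    lt_three_halves_mul_of_abs_log_lt (by positivity) hn0 hnear
  have hmn : 2 * m < 3 * n := by
    rify
    linarith
  rw [leftMajorant, if_pos (mem_filter.mpr ⟨mem_Ioc.mpr ⟨by lia, hnm⟩, hn⟩)]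
  exact perronWeight_div_abs_log_le_of_gt hx (by linarith) hxn

lemma pos_of_log_add_half_nonneg (hx : 0 ≤ Real.log (m + 1 / 2)) : 0 < m := by
  refine Nat.pos_of_ne_zero fun hm ↦ hx.not_gt ?_
  rw [hm, Nat.cast_zero]
  exact Real.log_neg (by norm_num) (by norm_num)

lemma perronWeight_div_abs_log_le (hx : 1.25 ≤ Real.log (m + 1 / 2)) (n : ℕ) :
    perronWeight (m + 1 / 2) n / |Real.log ((m + 1 / 2) / n)| ≤
      6.71 * logZetaTerm (1 + 1 / Real.log (m + 1 / 2)) n + rightMajorant m n +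
        1.75 * leftMajorant m n := by
  have hzeta := logZetaTerm_nonneg (1 + 1 / Real.log (m + 1 / 2)) n
  have hright := rightMajorant_nonneg m n
  have hleft := leftMajorant_nonneg m n
  by_cases hn : IsPrimePow n
  · obtain hfar | hnear := le_or_gt (Real.log (3 / 2)) |Real.log ((m + 1 / 2) / n)|
    · linarith [perronWeight_div_abs_log_le_of_far (by positivity) hfar]
    obtain hnm | hmn := le_or_gt n m
    · linarith [perronWeight_div_abs_log_le_leftMajorant hx hn hnm hnear]
    · have hm := pos_of_log_add_half_nonneg (m := m) (by linarith)
      linarith [perronWeight_div_abs_log_le_rightMajorant hm hn hmn hnear]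
  · rw [perronWeight_eq_zero hn, zero_div]
    positivity

lemma log_one_add_le_log_add_one_div {y : ℝ} (hy : 0 < y) :
    Real.log (1 + y) ≤ Real.log y + 1 / y := by
  have := Real.log_le_sub_one_of_pos (show 0 < (1 + y) / y by positivity)
  rw [Real.log_div (by positivity) hy.ne', add_div, div_self hy.ne'] at this
  linarith

lemma hasSum_ite_mem {ι M : Type*} [DecidableEq ι] [AddCommMonoid M] [TopologicalSpace M]
    (S : Finset ι) (f : ι → M) : HasSum (fun i ↦ if i ∈ S then f i else 0) (∑ i ∈ S, f i) := by
  have h : HasSum (fun i ↦ if i ∈ S then f i else 0) (∑ i ∈ S, if i ∈ S then f i else 0) :=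
    hasSum_sum_of_ne_finset_zero fun _ hi ↦ if_neg hi
  rwa [sum_ite_mem, inter_self] at h

lemma tsum_logZetaTerm_le_log_log {L : ℝ} (hL : 1.25 ≤ L) :
    ∑' n, logZetaTerm (1 + 1 / L) n ≤ Real.log L + 0.8 := by
  have hL0 : 0 < L := by linarith
  calc ∑' n, logZetaTerm (1 + 1 / L) n
      ≤ Real.log ((1 + 1 / L) / (1 + 1 / L - 1)) :=
        tsum_logZetaTerm_le (lt_add_of_pos_right 1 (one_div_pos.mpr hL0))
    _ = Real.log (1 + L) := by congr 1; field_simp; ring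
    _ ≤ Real.log L + 1 / L := log_one_add_le_log_add_one_div hL0
    _ ≤ Real.log L + 0.8 := by
      gcongr
      rw [div_le_iff₀ hL0]
      linarith

lemma exists_hasSum_majorant (hx : 1.25 ≤ Real.log (m + 1 / 2)) :
    ∃ S ≤ 39.71 * Real.log (Real.log (m + 1 / 2)) + 38.4,
      HasSum (fun n ↦ 6.71 * logZetaTerm (1 + 1 / Real.log (m + 1 / 2)) n + rightMajorant m n +
        1.75 * leftMajorant m n) S := by
  have hs : 1 < 1 + 1 / Real.log (m + 1 / 2) :=
    lt_add_of_pos_right 1 (one_div_pos.mpr (by linarith))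
  have hright : HasSum (rightMajorant m) _ := hasSum_ite_mem _ _
  have hleft : HasSum (leftMajorant m) _ := hasSum_ite_mem _ _
  refine ⟨_, ?_, (((summable_logZetaTerm hs).hasSum.mul_left 6.71).add hright).add
    (hleft.mul_left 1.75)⟩
  linarith [tsum_logZetaTerm_le_log_log hx,
    sum_primePow_right_le (m := m) (x := m + 1 / 2) (by linarith) (by linarith),
    sum_primePow_left_le (m := m) (x := m + 1 / 2) (by linarith) (by linarith)]

theorem tsum_perronWeight_mul_min_le {T : ℝ} (hT : 0 ≤ T)
    (hx : 1.25 ≤ Real.log (m + 1 / 2)) :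
    ∑' n : ℕ, perronWeight (m + 1 / 2) n * min 1 (1 / (T * |Real.log ((m + 1 / 2) / n)|)) ≤
      1 / T * (39.71 * Real.log (Real.log (m + 1 / 2)) + 38.4) := by
  obtain ⟨S, hS, hsum⟩ := exists_hasSum_majorant hx
  have hx0 : (0 : ℝ) ≤ m + 1 / 2 := by positivity
  have hterm (n : ℕ) :
      perronWeight (m + 1 / 2) n * min 1 (1 / (T * |Real.log ((m + 1 / 2) / n)|)) ≤
        1 / T * (6.71 * logZetaTerm (1 + 1 / Real.log (m + 1 / 2)) n + rightMajorant m n +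
          1.75 * leftMajorant m n) := calc
    _ ≤ perronWeight (m + 1 / 2) n * (1 / (T * |Real.log ((m + 1 / 2) / n)|)) :=
      mul_le_mul_of_nonneg_left (min_le_right _ _) (perronWeight_nonneg hx0 n)
    _ = 1 / T * (perronWeight (m + 1 / 2) n / |Real.log ((m + 1 / 2) / n)|) := by ring
    _ ≤ _ := mul_le_mul_of_nonneg_left (perronWeight_div_abs_log_le hx n) (one_div_nonneg.mpr hT)
  have hmajorant := hsum.mul_left (1 / T)
  have hsummable := hmajorant.summable.of_nonneg_of_le
    (fun n ↦ mul_nonneg (perronWeight_nonneg hx0 n) (by positivity)) hterm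
  refine (hasSum_le hterm hsummable.hasSum hmajorant).trans ?_
  gcongr

end PerronSeries

lemma le_log_of_three_and_half_le {x : ℝ} (hx : 3.5 ≤ x) : 1.25 ≤ Real.log x := by
  have hexp : Real.exp 1.25 ^ 4 < 3.5 ^ 4 := calc
    Real.exp 1.25 ^ 4 = Real.exp 1 ^ 5 := by
      rw [← Real.exp_nat_mul, ← Real.exp_nat_mul]
      norm_num
    _ < 2.7182818286 ^ 5 := by gcongr; exact Real.exp_one_lt_d9
    _ < 3.5 ^ 4 := by norm_num
  rw [Real.le_log_iff_exp_le (by linarith)]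
  exact (lt_of_pow_lt_pow_left₀ 4 (by norm_num) hexp).le.trans hx

open ArithmeticFunction in
theorem truncated_perron_error_bound_sharp_general (x T : ℝ)
    (hx : ∃ m : ℕ, x = m + 1 / 2) (hx' : 3.5 ≤ x) (hT : 0 < T) :
    (∑' n : ℕ, if 2 ≤ n then
        (x / n) ^ (1 / Real.log x) * (Λ n / (n * Real.log n)) *
          min 1 (1 / (T * |Real.log (x / n)|))
      else 0)
    < 1 / T * (40.22465 * Real.log (Real.log x) + 58.11106
        + 3.86972 / Real.log x + 5.21918 * Real.log x / Real.sqrt x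
        - 1.85268 / Real.sqrt x) := by
  obtain ⟨m, rfl⟩ := hx
  have hlog := le_log_of_three_and_half_le hx'
  have hloglog := Real.log_nonneg (show 1 ≤ Real.log (m + 1 / 2) by linarith)
  have hsqrt : 1.85268 / Real.sqrt (m + 1 / 2) ≤
      5.21918 * Real.log (m + 1 / 2) / Real.sqrt (m + 1 / 2) := by gcongr; linarith
  have hinv : 0 < 3.86972 / Real.log (m + 1 / 2) := by positivity
  have hseries := tsum_perronWeight_mul_min_le hT.le hlog
  refine lt_of_le_of_lt ?_ (hseries.trans_lt (mul_lt_mul_of_pos_left ?_ (one_div_pos.mpr hT)))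
  · refine (tsum_congr fun n ↦ ?_).le
    split_ifs with hn
    · rfl
    · rw [perronWeight_eq_zero fun h ↦ hn h.two_le, zero_mul]
  · linarith

open ArithmeticFunction in
/-- The concluding estimate of Section 3.5: the Perron error series is strictly
less than `(1/T)(40.22465 log log x + 58.11106 + 3.86972/log x
+ 5.21918 log x/√x − 1.85268/√x)`. -/
theorem truncated_perron_error_bound_sharp (x T : ℝ)
    (hx : ∃ m : ℕ, 0 < m ∧ x = m + 1 / 2) (hx' : 3.5 ≤ x)
    (hT : 1 / Real.log (3 / 2) ≤ T) :
    (∑' n : ℕ, if 2 ≤ n then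
        (x / n) ^ (1 / Real.log x) * (Λ n / (n * Real.log n)) *
          min 1 (1 / (T * |Real.log (x / n)|))
      else 0)
    < 1 / T * (40.22465 * Real.log (Real.log x) + 58.11106
        + 3.86972 / Real.log x + 5.21918 * Real.log x / Real.sqrt x
        - 1.85268 / Real.sqrt x) :=
  truncated_perron_error_bound_sharp_general x T (hx.imp fun _ h ↦ h.2) hx'
    ((one_div_pos.mpr (Real.log_pos (by norm_num))).trans_le hT)
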